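/- Let R be a pseudo-valuation domain issued from (V, M, k), i.e., R = φ⁻¹(k) where (V, M) is a valuation domain with residue field K = V/M, φ : V → K the quotient map, and k a subfield of K. Let a be a nonzero element of M, and W a k-vector subspace of K with k ⊊ W ⊊ K. Set I := a·φ⁻¹(W). Then for every r ≥ 1, the divisorial closure satisfies (I^r)_v = a^r·V. -/

import Mathlib

open scoped nonZeroDivisors

/-- The `v`-operation (divisorial closure) on `R`-submodules of the fraction field `K`:
`I_v = (I⁻¹)⁻¹` where `I⁻¹ = (R : I) = 1 / I`. -/
noncomputable def vS (R K : Type*) [CommRing R] [Field K] [Algebra R K]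
    (I : Submodule R K) : Submodule R K := 1 / (1 / I)

/-- The `t`-operation: `I_t = ⋃ J_v` where `J` ranges over nonzero finitely generated
sub-ideals of `I`. -/
noncomputable def tS (R K : Type*) [CommRing R] [Field K] [Algebra R K]
    (I : Submodule R K) : Submodule R K :=
  ⨆ J ∈ {J : Submodule R K | J ≠ ⊥ ∧ J.FG ∧ J ≤ I}, vS R K J

/-- The image of an ideal of `R` in the fraction field `K`, as an `R`-submodule. -/
noncomputable def idealToSub (R K : Type*) [CommRing R] [Field K] [Algebra R K]
    (I : Ideal R) : Submodule R K := Submodule.map (Algebra.linearMap R K) I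

/-- The `t`-closure of an ideal of `R`, computed in the fraction field `K`. -/
noncomputable def tI (R K : Type*) [CommRing R] [Field K] [Algebra R K]
    (I : Ideal R) : Submodule R K := tS R K (idealToSub R K I)

/-- The `v`-closure of an ideal of `R`, computed in the fraction field `K`. -/
noncomputable def vI (R K : Type*) [CommRing R] [Field K] [Algebra R K]
    (I : Ideal R) : Submodule R K := vS R K (idealToSub R K I)

/-- Let `R = φ⁻¹(k)` be a pseudo-valuation domain issued from `(V, M, k)`, `0 ≠ a ∈ M` and
`W` a `k`-subspace of `K = V/M` with `k ⊊ W ⊊ K`. For `I := a·φ⁻¹(W)`, the divisorial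
closure satisfies `(I^r)_v = a^r·V` for every `r ≥ 1` (computed in the common quotient
field `Q` of `R` and `V`). -/
theorem pvd_v_closure_of_power (V : Type*) [CommRing V] [IsDomain V] [ValuationRing V]
    (k : Subfield (IsLocalRing.ResidueField V))
    (R : Subring V) (hR : R = Subring.comap (IsLocalRing.residue V) k.toSubring)
    (Q : Type*) [Field Q] [Algebra V Q] [IsFractionRing V Q]
    [Algebra ↥R Q] [IsScalarTower ↥R V Q]
    (W : Submodule ↥k (IsLocalRing.ResidueField V))
    (hkW : (↑k : Set (IsLocalRing.ResidueField V)) ⊂ (↑W : Set (IsLocalRing.ResidueField V)))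
    (hWK : (↑W : Set (IsLocalRing.ResidueField V)) ≠ Set.univ)
    (a : V) (haM : a ∈ IsLocalRing.maximalIdeal V) (ha0 : a ≠ 0)
    (I : Ideal ↥R)
    (hI : ∀ x : ↥R, x ∈ I ↔ ∃ y : V, IsLocalRing.residue V y ∈ W ∧ (x : V) = a * y)
    (r : ℕ) (hr : 1 ≤ r) :
    (↑(vS ↥R Q (idealToSub ↥R Q (I ^ r))) : Set Q)
      = Set.range (fun v : V => algebraMap V Q (a ^ r * v)) := by
  classical
  have hRm : ∀ v : V, v ∈ R ↔ IsLocalRing.residue V v ∈ k := by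
    intro v
    rw [hR]
    rfl
  have hres0 : ∀ v : V, v ∈ IsLocalRing.maximalIdeal V → IsLocalRing.residue V v = 0 :=
    fun v hv => (IsLocalRing.residue_eq_zero_iff v).2 hv
  have hMR : ∀ v : V, v ∈ IsLocalRing.maximalIdeal V → v ∈ R := by
    intro v hv
    rw [hRm, hres0 v hv]
    exact k.zero_mem
  have hinj : Function.Injective (algebraMap V Q) := IsFractionRing.injective V Q
  have hone : ∀ q : Q, q ∈ (1 : Submodule ↥R Q) ↔ ∃ v : V, v ∈ R ∧ algebraMap V Q v = q := by
    intro q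
    rw [Submodule.mem_one]
    constructor
    · rintro ⟨y, rfl⟩
      exact ⟨y, y.2, (IsScalarTower.algebraMap_apply ↥R V Q y).symm⟩
    · rintro ⟨v, hv, rfl⟩
      exact ⟨⟨v, hv⟩, IsScalarTower.algebraMap_apply ↥R V Q ⟨v, hv⟩⟩
  obtain ⟨w, hwW, hwk⟩ := Set.exists_of_ssubset hkW
  obtain ⟨y, rfl⟩ := IsLocalRing.residue_surjective w
  have h1W : IsLocalRing.residue V 1 ∈ W := by
    rw [map_one]
    exact hkW.1 k.one_mem
  have hyk : y ∉ R := fun h => hwk ((hRm y).1 h)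
  have hfa : algebraMap V Q a ≠ 0 := by
    intro h
    exact ha0 (hinj (by rw [h, map_zero]))
  have hfar : algebraMap V Q a ^ r ≠ 0 := pow_ne_zero _ hfa
  -- elements of the power
  have haR : a ∈ R := hMR a haM
  have hayM : a * y ∈ IsLocalRing.maximalIdeal V := Ideal.mul_mem_right _ _ haM
  have hayR : a * y ∈ R := hMR _ hayM
  have haI : (⟨a, haR⟩ : ↥R) ∈ I := (hI _).2 ⟨1, h1W, (mul_one a).symm⟩
  have hayI : (⟨a * y, hayR⟩ : ↥R) ∈ I := (hI _).2 ⟨y, hwW, rfl⟩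
  have hpow1 : (⟨a, haR⟩ : ↥R) ^ r ∈ I ^ r := Ideal.pow_mem_pow haI r
  have hpow2 : (⟨a, haR⟩ : ↥R) ^ (r - 1) * ⟨a * y, hayR⟩ ∈ I ^ r := by
    have h := Ideal.mul_mem_mul (Ideal.pow_mem_pow haI (r - 1)) hayI
    rwa [← pow_succ, Nat.sub_add_cancel hr] at h
  have hdvd : ∀ x : ↥R, x ∈ I ^ r → a ^ r ∣ (x : V) := by
    intro x hx
    have h1 : I ≤ Ideal.comap R.subtype (Ideal.span {a}) := by
      intro z hz
      obtain ⟨u, -, hu⟩ := (hI z).1 hz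
      rw [Ideal.mem_comap, Ideal.mem_span_singleton]
      exact ⟨u, hu⟩
    have h2 := (Ideal.pow_right_mono h1 r).trans (Ideal.le_comap_pow R.subtype r) hx
    rw [Ideal.mem_comap, Ideal.span_singleton_pow, Ideal.mem_span_singleton] at h2
    exact h2
  have hmemJ : ∀ x : ↥R, x ∈ I ^ r → algebraMap V Q x ∈ idealToSub ↥R Q (I ^ r) := by
    intro x hx
    exact ⟨x, hx, IsScalarTower.algebraMap_apply ↥R V Q x⟩
  have hinv : ∀ q : Q, q ∈ 1 / idealToSub ↥R Q (I ^ r) ↔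
      ∃ m ∈ IsLocalRing.maximalIdeal V, q * algebraMap V Q a ^ r = algebraMap V Q m := by
    intro q
    rw [Submodule.mem_div_iff_forall_mul_mem]
    constructor
    · intro h
      obtain ⟨m, hmR, hm⟩ := (hone _).1 (h _ (hmemJ _ hpow1))
      obtain ⟨n, hnR, hn⟩ := (hone _).1 (h _ (hmemJ _ hpow2))
      have hm' : q * algebraMap V Q a ^ r = algebraMap V Q m := by
        rw [hm]; simp
      refine ⟨m, ?_, hm'⟩
      have hn' : n = m * y := by
        apply hinj
        rw [hn, map_mul, ← hm']
        obtain ⟨s, rfl⟩ : ∃ s, r = s + 1 := ⟨r - 1, by omega⟩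
        simp only [Nat.add_sub_cancel, Subring.coe_mul, Subring.coe_pow, map_mul, map_pow]
        ring
      by_contra hmM
      have hm0 : IsLocalRing.residue V m ≠ 0 := fun h0 =>
        hmM ((IsLocalRing.residue_eq_zero_iff m).1 h0)
      apply hwk
      have e : IsLocalRing.residue V y
          = (IsLocalRing.residue V m)⁻¹ * IsLocalRing.residue V n := by
        rw [hn', map_mul, inv_mul_cancel_left₀ hm0]
      rw [e]
      exact k.mul_mem (k.inv_mem ((hRm m).1 hmR)) ((hRm n).1 hnR)
    · rintro ⟨m, hmM, hm⟩ _ ⟨x, hx, rfl⟩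
      obtain ⟨u, hu⟩ := hdvd x hx
      refine (hone _).2 ⟨m * u, hMR _ (Ideal.mul_mem_right _ _ hmM), ?_⟩
      rw [Algebra.linearMap_apply, IsScalarTower.algebraMap_apply ↥R V Q x]
      change _ = q * algebraMap V Q (x : V)
      rw [hu, map_mul, map_mul, map_pow, ← hm]
      ring
  ext q
  rw [SetLike.mem_coe, vS, Submodule.mem_div_iff_forall_mul_mem]
  constructor
  · intro h
    have key : ∀ m ∈ IsLocalRing.maximalIdeal V, ∃ v ∈ R,
        algebraMap V Q v = q / algebraMap V Q a ^ r * algebraMap V Q m := by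
      intro m hm
      obtain ⟨v, hv, e⟩ := (hone _).1 (h (algebraMap V Q m / algebraMap V Q a ^ r)
        ((hinv _).2 ⟨m, hm, div_mul_cancel₀ _ hfar⟩))
      exact ⟨v, hv, by rw [e]; ring⟩
    have hV : ∃ v : V, algebraMap V Q v = q / algebraMap V Q a ^ r := by
      rcases ValuationRing.isInteger_or_isInteger V (q / algebraMap V Q a ^ r) with h1 | h1
      · exact h1
      · obtain ⟨t, ht⟩ := h1
        by_cases htM : t ∈ IsLocalRing.maximalIdeal V
        · by_cases hq : q / algebraMap V Q a ^ r = 0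
          · exact ⟨0, by rw [hq, map_zero]⟩
          · exfalso
            obtain ⟨v, hv, e⟩ := key (t * y) (Ideal.mul_mem_right _ _ htM)
            rw [map_mul, ht, mul_inv_cancel_left₀ hq] at e
            exact hyk (hinj e ▸ hv)
        · have hu : IsUnit t := by
            by_contra hu
            exact htM ((IsLocalRing.mem_maximalIdeal t).2 hu)
          obtain ⟨u, rfl⟩ := hu
          refine ⟨((u⁻¹ : Vˣ) : V), ?_⟩
          rw [← inv_inv (q / algebraMap V Q a ^ r), ← ht]
          apply eq_inv_of_mul_eq_one_left
          rw [← map_mul, Units.inv_mul, map_one]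
    obtain ⟨v, hv⟩ := hV
    refine ⟨v, ?_⟩
    simp only [map_mul, map_pow]
    rw [hv, mul_div_cancel₀ _ hfar]
  · rintro ⟨v, rfl⟩ p hp
    obtain ⟨m, hm, e⟩ := (hinv p).1 hp
    refine (hone _).2 ⟨v * m, hMR _ (Ideal.mul_mem_left _ _ hm), ?_⟩
    simp only [map_mul, map_pow]
    rw [← e]
    ring
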